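/- For every integer d ≥ 2, there exists a subset of ℕ^d of size d^{d−2}(d^2 + d − 1) + 1 that is not coverable; consequently h(ℕ^d) ≤ d^{d−2}(d^2 + d − 1). -/

import Mathlib

/-- A winning guessing strategy in the hat guessing game on `G` with `q` colors:
each vertex `v` gets a guessing function from colorings of its open neighborhood
to colors, such that for every coloring some vertex guesses its own color. -/
def HatWinning {V : Type*} (G : SimpleGraph V) (q : ℕ) : Prop :=
  ∃ g : (v : V) → ({w : V // G.Adj v w} → Fin q) → Fin q,
    ∀ χ : V → Fin q, ∃ v : V, g v (fun w => χ w.1) = χ v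

/-- The hat guessing number of `G`: the largest number of colors for which the
players have a winning strategy. -/
noncomputable def hatGuessingNumber {V : Type*} (G : SimpleGraph V) : ℕ :=
  sSup {q : ℕ | HatWinning G q}

/-- Sylvester's sequence: `s 0 = 2`, `s (n+1) = s n ^ 2 - s n + 1`. -/
def sylvester : ℕ → ℕ
  | 0 => 2
  | n + 1 => sylvester n ^ 2 - sylvester n + 1

/-- The graph `G_d(N)`: vertices are the vertices of the complete rooted `N`-ary
tree of depth `d` (encoded as lists of child-indices of length at most `d`), and
each vertex is adjacent to all of its ancestors (its proper prefixes). -/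
def ancTree (d N : ℕ) : SimpleGraph {l : List (Fin N) // l.length ≤ d} where
  Adj v w := v ≠ w ∧ (v.1 <+: w.1 ∨ w.1 <+: v.1)
  symm := by
    refine ⟨?_⟩
    intro v w h
    exact ⟨h.1.symm, h.2.symm⟩
  loopless := by
    refine ⟨?_⟩
    intro v h
    exact h.1 rfl

/-- The book graph `B_{d,n}`: a spine of `d` vertices forming a clique, completely
joined to `n` pages forming an independent set. -/
def bookGraph (d n : ℕ) : SimpleGraph (Fin d ⊕ Fin n) where
  Adj x y := x ≠ y ∧ (x.isLeft ∨ y.isLeft)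
  symm := by
    refine ⟨?_⟩
    intro x y h
    exact ⟨h.1.symm, h.2.symm⟩
  loopless := by
    refine ⟨?_⟩
    intro x h
    exact h.1 rfl

/-- A set `S ⊆ ℕ^d` is coverable if it can be partitioned into parts `S_1, …, S_d`
such that `S_i` contains at most one point on every line parallel to the `i`-th
coordinate axis, i.e. two distinct points in part `i` differ in some coordinate
other than the `i`-th. -/
def Coverable {d : ℕ} (S : Set (Fin d → ℕ)) : Prop :=
  ∃ f : (Fin d → ℕ) → Fin d, ∀ x ∈ S, ∀ y ∈ S,
    x ≠ y → f x = f y → ∃ j : Fin d, j ≠ f x ∧ x j ≠ y j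

/-- `hcov d` is `h(ℕ^d)`: the largest `t` such that every `t`-element subset of
`ℕ^d` is coverable. -/
noncomputable def hcov (d : ℕ) : ℕ :=
  sSup {t : ℕ | ∀ S : Set (Fin d → ℕ), S.Finite → S.ncard = t → Coverable S}

/-- `p` is a left-to-right path with `k` edges in a graph on `Fin n` with the
natural vertex ordering: a strictly increasing sequence of `k+1` vertices in which
consecutive vertices are adjacent. -/
def IsLTRPath {n : ℕ} (G : SimpleGraph (Fin n)) (k : ℕ) (p : Fin (k + 1) → Fin n) : Prop :=
  StrictMono p ∧ ∀ i : Fin k, G.Adj (p i.castSucc) (p i.succ)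

/-- The depth of a vertex `v`: the largest number of edges in a left-to-right path
ending at `v`. -/
noncomputable def ltrDepth {n : ℕ} (G : SimpleGraph (Fin n)) (v : Fin n) : ℕ :=
  sSup {k : ℕ | ∃ p : Fin (k + 1) → Fin n, IsLTRPath G k p ∧ p (Fin.last k) = v}

/-!
In a cover the `i`-th part has at most one point on each line parallel to the `i`-th axis, so a
coverable set has at most as many points as there are axis-parallel lines meeting it. A box with one
side of length `d + 1` and `d - 1` sides of length `d` meets `d ^ (d - 1)` lines in the direction of
the long side and `(d + 1) * d ^ (d - 2)` in each other direction, `d ^ (d - 2) * (d ^ 2 + d - 1)`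
in total, but it has `d ^ (d - 2) * (d ^ 2 + d)` points. Hence the box contains non-coverable sets
with one point more than that number of lines, and enlarging such a set keeps it non-coverable.
-/

section

open Finset

section AxisLines

variable {ι α : Type*} [Fintype ι] [DecidableEq ι] [DecidableEq α]

/-- The lines parallel to the `i`-th coordinate axis that meet `S`. A line is encoded by the
coordinates other than the `i`-th, which are constant along it. -/
def axisLines (S : Finset (ι → α)) (i : ι) : Finset (({i}ᶜ : Finset ι) → α) :=
  S.image (Finset.restrict {i}ᶜ)

theorem card_axisLines_le_prod {S : Finset (ι → α)} {s : ι → Finset α}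
    (hS : S ⊆ Fintype.piFinset s) (i : ι) :
    #(axisLines S i) ≤ ∏ j ∈ {i}ᶜ, #(s j) := by
  have hsub : axisLines S i ⊆ Fintype.piFinset fun j : ({i}ᶜ : Finset ι) => s j :=
    image_subset_iff.2 fun x hx =>
      Fintype.mem_piFinset.2 fun j => Fintype.mem_piFinset.1 (hS hx) j
  calc #(axisLines S i)
      ≤ #(Fintype.piFinset fun j : ({i}ᶜ : Finset ι) => s j) := card_le_card hsub
    _ = ∏ j ∈ {i}ᶜ, #(s j) := by
      rw [Fintype.card_piFinset, prod_coe_sort {i}ᶜ fun j => #(s j)]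

end AxisLines

section Coverable

variable {d : ℕ}

theorem Coverable.mono {S T : Set (Fin d → ℕ)} (hST : S ⊆ T) (hT : Coverable T) :
    Coverable S := by
  obtain ⟨f, hf⟩ := hT
  exact ⟨f, fun x hx y hy => hf x (hST hx) y (hST hy)⟩

theorem coverable_empty [NeZero d] : Coverable (∅ : Set (Fin d → ℕ)) :=
  ⟨fun _ => 0, by simp⟩

theorem Coverable.card_le_sum_card_axisLines {S : Finset (Fin d → ℕ)}
    (hS : Coverable (S : Set (Fin d → ℕ))) : #S ≤ ∑ i, #(axisLines S i) := by
  obtain ⟨f, hf⟩ := hS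
  have card_part_le (i : Fin d) : #{x ∈ S | f x = i} ≤ #(axisLines S i) := by
    refine card_le_card_of_injOn (Finset.restrict {i}ᶜ)
      (fun x hx => mem_image_of_mem _ (mem_filter.1 hx).1) fun x hx y hy hxy => ?_
    obtain ⟨hxS, rfl⟩ := mem_filter.1 hx
    obtain ⟨hyS, hfy⟩ := mem_filter.1 hy
    by_contra hne
    obtain ⟨j, hj, hxyj⟩ := hf x hxS y hyS hne hfy.symm
    exact hxyj (congrFun hxy ⟨j, by simpa using hj⟩)
  calc #S = ∑ i, #{x ∈ S | f x = i} :=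
        card_eq_sum_card_fiberwise fun _ _ => mem_coe.2 (mem_univ _)
    _ ≤ ∑ i, #(axisLines S i) := sum_le_sum fun i _ => card_part_le i

theorem exists_card_eq_not_coverable (n : Fin d → ℕ) {t : ℕ}
    (hlines : ∑ i, ∏ j ∈ {i}ᶜ, n j < t) (hpoints : t ≤ ∏ j, n j) :
    ∃ S : Finset (Fin d → ℕ), #S = t ∧ ¬ Coverable (S : Set (Fin d → ℕ)) := by
  have hbox : t ≤ #(Fintype.piFinset fun j => range (n j)) := by simpa using hpoints
  obtain ⟨S, hS, rfl⟩ := exists_subset_card_eq hbox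
  refine ⟨S, rfl, fun hcover => hlines.not_ge ?_⟩
  calc #S ≤ ∑ i, #(axisLines S i) := hcover.card_le_sum_card_axisLines
    _ ≤ ∑ i, ∏ j ∈ {i}ᶜ, n j :=
      sum_le_sum fun i _ => by simpa using card_axisLines_le_prod hS i

theorem hcov_lt_card_of_not_coverable [NeZero d] {S : Finset (Fin d → ℕ)}
    (hS : ¬ Coverable (S : Set (Fin d → ℕ))) : hcov d < #S := by
  have hpos : 0 < #S := by
    rw [card_pos, nonempty_iff_ne_empty]
    rintro rfl
    exact hS (by simpa using coverable_empty)
  refine (Nat.lt_iff_le_pred hpos).2 (csSup_le' fun t ht => Nat.le_pred_of_lt ?_)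
  by_contra! hle
  obtain ⟨T, hST, rfl⟩ := Infinite.exists_superset_card_eq S t hle
  exact hS ((ht T T.finite_toSet (Set.ncard_coe_finset T)).mono (coe_subset.2 hST))

end Coverable

theorem sum_prod_compl_update {ι R : Type*} [Fintype ι] [DecidableEq ι] [CommSemiring R]
    (i₀ : ι) (a b : R) :
    ∑ i, ∏ j ∈ {i}ᶜ, Function.update (fun _ => a) i₀ b j =
      a ^ (Fintype.card ι - 1) + (Fintype.card ι - 1 : ℕ) * (b * a ^ (Fintype.card ι - 2)) := by
  have prod_eq : ∏ j ∈ {i₀}ᶜ, Function.update (fun _ => a) i₀ b j = a ^ (Fintype.card ι - 1) := by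
    rw [prod_update_of_notMem (by simp), prod_const, card_compl, card_singleton]
  have prod_ne (i : ι) (hi : i ∈ ({i₀}ᶜ : Finset ι)) :
      ∏ j ∈ {i}ᶜ, Function.update (fun _ => a) i₀ b j = b * a ^ (Fintype.card ι - 2) := by
    have hi₀ : i₀ ∈ ({i}ᶜ : Finset ι) := by simpa [eq_comm] using hi
    rw [prod_update_of_mem hi₀, prod_const, card_sdiff_of_subset (singleton_subset_iff.2 hi₀),
      card_compl, card_singleton, card_singleton, Nat.sub_sub]
  rw [Fintype.sum_eq_add_sum_compl i₀, prod_eq, sum_congr rfl prod_ne, sum_const, card_compl,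
    card_singleton, nsmul_eq_mul]

end

/-- Upper bound of Lemma 6: for `d ≥ 2` there is a subset of `ℕ^d` of size
`d^(d-2)(d^2+d-1) + 1` that is not coverable; consequently
`h(ℕ^d) ≤ d^(d-2)(d^2+d-1)`. -/
theorem hcov_le (d : ℕ) (hd : 2 ≤ d) :
    (∃ S : Set (Fin d → ℕ), S.Finite ∧ S.ncard = d ^ (d - 2) * (d ^ 2 + d - 1) + 1 ∧
      ¬ Coverable S) ∧
      hcov d ≤ d ^ (d - 2) * (d ^ 2 + d - 1) := by
  obtain ⟨k, rfl⟩ := Nat.exists_eq_add_of_le' hd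
  rw [Nat.add_sub_cancel]
  set L := (k + 2) ^ k * ((k + 2) ^ 2 + (k + 2) - 1) with hL
  have hsub : (k + 2) ^ 2 + (k + 2) - 1 = (k + 2) ^ 2 + k + 1 := by omega
  let n : Fin (k + 2) → ℕ := Function.update (fun _ => k + 2) 0 (k + 3)
  have hlines : ∑ i, ∏ j ∈ {i}ᶜ, n j = L := by
    simp only [n, sum_prod_compl_update, Fintype.card_fin, hL, hsub, Nat.add_sub_cancel,
      Nat.add_succ_sub_one, Nat.cast_id]
    ring
  have hpoints : ∏ j, n j = L + (k + 2) ^ k := by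
    rw [Finset.prod_update_of_mem (Finset.mem_univ _), Finset.prod_const,
      Finset.card_univ_sdiff, Fintype.card_fin, Finset.card_singleton, hL, hsub,
      Nat.add_succ_sub_one]
    ring
  have hpos : 0 < (k + 2) ^ k := by positivity
  obtain ⟨S, hcard, hS⟩ := exists_card_eq_not_coverable n (t := L + 1) (by omega) (by omega)
  refine ⟨⟨S, S.finite_toSet, (Set.ncard_coe_finset S).trans hcard, hS⟩, ?_⟩
  exact Nat.le_of_lt_succ ((hcov_lt_card_of_not_coverable hS).trans_eq hcard)
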